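/- arXiv:1712.03252 — 5 statements merged into one kernel-verified Lean document; each statement's English description precedes it below -/
import Mathlib

section
/- Let p > 1 and let N, n ≥ 1 be integers. There exists a constant c = c(N, p) > 0, independent of μ, such that for every μ ∈ [0, 1] and every pair of matrices a, b ∈ ℝ^{N×n} (equipped with the Euclidean/Frobenius norm), ‖(μ² + ‖a‖²)^{(p−2)/4} a − (μ² + ‖b‖²)^{(p−2)/4} b‖² ≤ c (μ² + ‖a‖² + ‖b‖²)^{(p−2)/2} ‖a − b‖². -/
/-!
Put `r = (p - 2) / 2`. In `WithLp 2 (ℝ × E)` the vector `x = (μ, a)` has norm `√(μ² + ‖a‖²)`, so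
`√(μ² + ‖a‖²) ^ r • a` is the second component of `‖x‖ ^ r • x`. As `(μ, a) - (μ, b)` has norm
`‖a - b‖`, it suffices to estimate the map `x ↦ ‖x‖ ^ r • x` on a seminormed space. If
`‖y‖ ≤ ‖x‖`, then
`‖x‖ ^ r • x - ‖y‖ ^ r • y = ‖x‖ ^ r • (x - y) + (‖x‖ ^ r - ‖y‖ ^ r) • y`,
and Bernoulli's inequality for `t = ‖y‖ / ‖x‖` bounds the norm of the second term by
`|r| ‖x‖ ^ r (‖x‖ - ‖y‖)`. Finally, for `x = (μ, a)` and `y = (μ, b)`, the sum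
`μ² + ‖a‖² + ‖b‖²` lies between `max ‖x‖² ‖y‖²` and its double.
-/

lemma abs_self_sub_rpow_le {s t : ℝ} (hs : 0 ≤ s) (ht₀ : 0 ≤ t) (ht₁ : t ≤ 1) :
    |t - t ^ s| ≤ |s - 1| * (1 - t) := by
  have hneg : -1 ≤ t - 1 := by linarith
  rcases le_total 1 s with h | h
  · have bernoulli : 1 + s * (t - 1) ≤ t ^ s := by
      simpa using one_add_mul_self_le_rpow_one_add hneg h
    have hle : t ^ s ≤ t := Real.rpow_le_self_of_le_one ht₀ ht₁ h
    rw [abs_of_nonneg (sub_nonneg.2 hle), abs_of_nonneg (sub_nonneg.2 h)]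
    linarith
  · have bernoulli : t ^ s ≤ 1 + s * (t - 1) := by
      simpa using rpow_one_add_le_one_add_mul_self hneg hs h
    have hle : t ≤ t ^ s := Real.self_le_rpow_of_le_one ht₀ ht₁ h
    rw [abs_of_nonpos (sub_nonpos.2 hle), abs_of_nonpos (sub_nonpos.2 h)]
    linarith

lemma abs_rpow_sub_rpow_mul_le {r α β : ℝ} (hr : -1 ≤ r) (hβ : 0 ≤ β) (hβα : β ≤ α) :
    |α ^ r - β ^ r| * β ≤ |r| * α ^ r * (α - β) := by
  rcases hβ.eq_or_lt with rfl | hβ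
  · simp only [mul_zero, sub_zero]
    positivity
  have hα : 0 < α := hβ.trans_le hβα
  have ht : 0 < β / α := by positivity
  have hpow : β ^ r = α ^ r * (β / α) ^ r := by
    rw [← Real.mul_rpow hα.le ht.le, mul_div_cancel₀ _ hα.ne']
  have hscale : (α ^ r - β ^ r) * β = α ^ r * α * (β / α - (β / α) ^ (r + 1)) := by
    rw [hpow, Real.rpow_add_one ht.ne']
    field_simp
  calc |α ^ r - β ^ r| * β = |(α ^ r - β ^ r) * β| := by rw [abs_mul, abs_of_pos hβ]
    _ = α ^ r * α * |β / α - (β / α) ^ (r + 1)| := by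
        rw [hscale, abs_mul, abs_of_pos (a := α ^ r * α) (by positivity)]
    _ ≤ α ^ r * α * (|r + 1 - 1| * (1 - β / α)) := by
        gcongr
        exact abs_self_sub_rpow_le (by linarith) ht.le ((div_le_one hα).2 hβα)
    _ = |r| * α ^ r * (α - β) := by
        rw [add_sub_cancel_right]
        field_simp

lemma rpow_le_rpow_abs_mul_rpow {c x y : ℝ} (r : ℝ) (hc : 1 ≤ c) (hx : 0 ≤ x) (hxy : x ≤ y)
    (hyx : y ≤ c * x) : x ^ r ≤ c ^ |r| * y ^ r := by
  have hc₀ : 0 < c := by linarith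
  have hy₀ : 0 ≤ y := hx.trans hxy
  have hle_mul : y ^ r ≤ c ^ |r| * y ^ r :=
    le_mul_of_one_le_left (by positivity) (Real.one_le_rpow hc (abs_nonneg r))
  rcases le_total 0 r with h | h
  · exact (Real.rpow_le_rpow hx hxy h).trans hle_mul
  rcases hy₀.eq_or_lt with rfl | hy
  · rwa [le_antisymm hxy hx]
  calc x ^ r = c ^ |r| * (c * x) ^ r := by
        rw [Real.mul_rpow hc₀.le hx, ← mul_assoc, ← Real.rpow_add hc₀, abs_of_nonpos h,
          neg_add_cancel, Real.rpow_zero, one_mul]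
    _ ≤ c ^ |r| * y ^ r := by
        gcongr ?_ * ?_
        exact Real.rpow_le_rpow_of_nonpos hy hyx h

section SeminormedSpace

variable {E : Type*} [SeminormedAddCommGroup E] [NormedSpace ℝ E]

lemma norm_rpow_smul_sub_rpow_smul_le {r : ℝ} (hr : -1 ≤ r) (x y : E) :
    ‖‖x‖ ^ r • x - ‖y‖ ^ r • y‖ ≤ (1 + |r|) * max ‖x‖ ‖y‖ ^ r * ‖x - y‖ := by
  wlog hyx : ‖y‖ ≤ ‖x‖ generalizing x y
  · rw [norm_sub_rev, norm_sub_rev x, max_comm]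
    exact this y x (le_of_not_ge hyx)
  have hsplit : ‖x‖ ^ r • x - ‖y‖ ^ r • y = ‖x‖ ^ r • (x - y) + (‖x‖ ^ r - ‖y‖ ^ r) • y := by
    module
  rw [max_eq_left hyx, hsplit]
  calc ‖‖x‖ ^ r • (x - y) + (‖x‖ ^ r - ‖y‖ ^ r) • y‖
      ≤ ‖x‖ ^ r * ‖x - y‖ + |‖x‖ ^ r - ‖y‖ ^ r| * ‖y‖ := by
        refine (norm_add_le _ _).trans_eq ?_
        rw [norm_smul, norm_smul, Real.norm_eq_abs, Real.norm_eq_abs, abs_of_nonneg (by positivity)]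
    _ ≤ ‖x‖ ^ r * ‖x - y‖ + |r| * ‖x‖ ^ r * (‖x‖ - ‖y‖) := by
        gcongr _ + ?_
        exact abs_rpow_sub_rpow_mul_le hr (norm_nonneg y) hyx
    _ ≤ ‖x‖ ^ r * ‖x - y‖ + |r| * ‖x‖ ^ r * ‖x - y‖ := by
        gcongr
        exact norm_sub_norm_le x y
    _ = (1 + |r|) * ‖x‖ ^ r * ‖x - y‖ := by ring

lemma norm_sqrt_sq_add_rpow_smul_sub_le {r : ℝ} (hr : -1 ≤ r) (μ : ℝ) (a b : E) :
    ‖√(μ ^ 2 + ‖a‖ ^ 2) ^ r • a - √(μ ^ 2 + ‖b‖ ^ 2) ^ r • b‖ ≤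
      (1 + |r|) * max √(μ ^ 2 + ‖a‖ ^ 2) √(μ ^ 2 + ‖b‖ ^ 2) ^ r * ‖a - b‖ := by
  let embed (v : E) : WithLp 2 (ℝ × E) := WithLp.toLp 2 (μ, v)
  have norm_embed (v : E) : ‖embed v‖ = √(μ ^ 2 + ‖v‖ ^ 2) := by
    simp [embed, WithLp.prod_norm_eq_of_L2]
  have norm_embed_sub : ‖embed a - embed b‖ = ‖a - b‖ := by
    simp [embed, WithLp.prod_norm_eq_of_L2]
  rw [← norm_embed a, ← norm_embed b, ← norm_embed_sub]
  calc ‖‖embed a‖ ^ r • a - ‖embed b‖ ^ r • b‖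
      = ‖(‖embed a‖ ^ r • embed a - ‖embed b‖ ^ r • embed b).snd‖ := rfl
    _ ≤ ‖‖embed a‖ ^ r • embed a - ‖embed b‖ ^ r • embed b‖ := WithLp.norm_snd_le ℝ _
    _ ≤ (1 + |r|) * max ‖embed a‖ ‖embed b‖ ^ r * ‖embed a - embed b‖ :=
      norm_rpow_smul_sub_rpow_smul_le hr _ _

end SeminormedSpace

lemma max_sqrt_add_rpow_sq_le (r : ℝ) {m α β : ℝ} (hm : 0 ≤ m) (hα : 0 ≤ α) (hβ : 0 ≤ β) :
    (max √(m + α) √(m + β) ^ r) ^ 2 ≤ 2 ^ |r| * (m + α + β) ^ r := by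
  have hmax : 0 ≤ max (m + α) (m + β) := le_max_of_le_left (by positivity)
  rw [← Real.sqrt_monotone.map_max, Real.rpow_pow_comm (Real.sqrt_nonneg _), Real.sq_sqrt hmax]
  apply rpow_le_rpow_abs_mul_rpow r one_le_two hmax
  · exact max_le (by linarith) (by linarith)
  · linarith [le_max_left (m + α) (m + β), le_max_right (m + α) (m + β)]

theorem stmt_1_general.{u} (p : ℝ) (hp : 0 ≤ p) :
    ∃ c : ℝ, 0 < c ∧
      ∀ (E : Type u) [SeminormedAddCommGroup E] [NormedSpace ℝ E] (μ : ℝ) (a b : E),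
        ‖((μ ^ 2 + ‖a‖ ^ 2) ^ ((p - 2) / 4)) • a -
            ((μ ^ 2 + ‖b‖ ^ 2) ^ ((p - 2) / 4)) • b‖ ^ 2 ≤
          c * ((μ ^ 2 + ‖a‖ ^ 2 + ‖b‖ ^ 2) ^ ((p - 2) / 2)) * ‖a - b‖ ^ 2 := by
  obtain ⟨r, hr⟩ : ∃ r, r = (p - 2) / 2 := ⟨_, rfl⟩
  have hr₁ : -1 ≤ r := by linarith
  refine ⟨(1 + |r|) ^ 2 * 2 ^ |r|, by positivity, fun E _ _ μ a b ↦ ?_⟩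
  have hsqrt (v : E) : (μ ^ 2 + ‖v‖ ^ 2) ^ ((p - 2) / 4) = √(μ ^ 2 + ‖v‖ ^ 2) ^ r := by
    rw [← Real.rpow_div_two_eq_sqrt r (by positivity), hr, div_div]
    norm_num
  rw [hsqrt, hsqrt, ← hr]
  calc ‖√(μ ^ 2 + ‖a‖ ^ 2) ^ r • a - √(μ ^ 2 + ‖b‖ ^ 2) ^ r • b‖ ^ 2
      ≤ ((1 + |r|) * max √(μ ^ 2 + ‖a‖ ^ 2) √(μ ^ 2 + ‖b‖ ^ 2) ^ r * ‖a - b‖) ^ 2 := by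
        gcongr
        exact norm_sqrt_sq_add_rpow_smul_sub_le hr₁ μ a b
    _ = (1 + |r|) ^ 2 * (max √(μ ^ 2 + ‖a‖ ^ 2) √(μ ^ 2 + ‖b‖ ^ 2) ^ r) ^ 2 * ‖a - b‖ ^ 2 := by
        ring
    _ ≤ (1 + |r|) ^ 2 * (2 ^ |r| * (μ ^ 2 + ‖a‖ ^ 2 + ‖b‖ ^ 2) ^ r) * ‖a - b‖ ^ 2 := by
        gcongr
        exact max_sqrt_add_rpow_sq_le r (sq_nonneg μ) (sq_nonneg ‖a‖) (sq_nonneg ‖b‖)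
    _ = (1 + |r|) ^ 2 * 2 ^ |r| * (μ ^ 2 + ‖a‖ ^ 2 + ‖b‖ ^ 2) ^ r * ‖a - b‖ ^ 2 := by ring

/-- For `p > 1` there is a constant `c = c(N, p) > 0`, independent of `μ`, such that for all
`μ ∈ [0,1]` and all matrices `a, b ∈ ℝ^{N×n}` (Frobenius norm),
`‖(μ² + ‖a‖²)^{(p−2)/4} a − (μ² + ‖b‖²)^{(p−2)/4} b‖² ≤ c (μ² + ‖a‖² + ‖b‖²)^{(p−2)/2} ‖a − b‖²`. -/
theorem stmt_1 (p : ℝ) (hp : 1 < p) (N : ℕ) (hN : 1 ≤ N) :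
    ∃ c : ℝ, 0 < c ∧
      ∀ (n : ℕ), 1 ≤ n → ∀ μ : ℝ, 0 ≤ μ → μ ≤ 1 →
        ∀ a b : EuclideanSpace ℝ (Fin N × Fin n),
          ‖((μ ^ 2 + ‖a‖ ^ 2) ^ ((p - 2) / 4)) • a -
              ((μ ^ 2 + ‖b‖ ^ 2) ^ ((p - 2) / 4)) • b‖ ^ 2 ≤
            c * ((μ ^ 2 + ‖a‖ ^ 2 + ‖b‖ ^ 2) ^ ((p - 2) / 2)) * ‖a - b‖ ^ 2 := by
  obtain ⟨c, hc, h⟩ := stmt_1_general p (zero_le_one.trans hp.le)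
  exact ⟨c, hc, fun n _ μ _ _ a b ↦ h _ μ a b⟩
end

section
/- Let 0 < ρ < R₀, let h : [ρ, R₀] → ℝ be a non-negative bounded function, and let 0 < θ < 1, A ≥ 0 and β > 0. Assume that h(r) ≤ A/(d − r)^β + θ h(d) whenever ρ ≤ r < d ≤ R₀. Then there exists a constant c = c(θ, β) > 0, depending only on θ and β, such that h(ρ) ≤ c A/(R₀ − ρ)^β. -/
/-!
Evaluate the hypothesis along the radii `rₙ = R₀ - τⁿ (R₀ - ρ)`, which increase from `ρ` towards
`R₀` with `rₙ₊₁ - rₙ = τⁿ (1 - τ) (R₀ - ρ)`. Iterating it `n` times bounds `h ρ` by a partial sum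
of a geometric series of ratio `θ / τ ^ β`, plus a remainder `θⁿ h (rₙ)`, which vanishes in the
limit because `h` is bounded. The series converges as soon as `τ` is so close to `1` that
`θ < τ ^ β`.
-/

open Filter Set Topology

theorem le_sum_range_of_le_add_mul_succ {R : Type*} [CommSemiring R] [PartialOrder R]
    [IsOrderedRing R] {u a : ℕ → R} {θ : R} (hθ : 0 ≤ θ) (hu : ∀ n, u n ≤ a n + θ * u (n + 1))
    (n : ℕ) :
    u 0 ≤ ∑ i ∈ Finset.range n, θ ^ i * a i + θ ^ n * u n := by
  induction n with
  | zero => simp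
  | succ n ih =>
    calc u 0 ≤ ∑ i ∈ Finset.range n, θ ^ i * a i + θ ^ n * u n := ih
      _ ≤ ∑ i ∈ Finset.range n, θ ^ i * a i + θ ^ n * (a n + θ * u (n + 1)) := by
        gcongr
        exact hu n
      _ = ∑ i ∈ Finset.range (n + 1), θ ^ i * a i + θ ^ (n + 1) * u (n + 1) := by
        rw [Finset.sum_range_succ]
        ring

theorem le_of_hasSum_of_le_add_mul_succ {𝕜 : Type*} [Field 𝕜] [LinearOrder 𝕜]
    [IsStrictOrderedRing 𝕜] [Archimedean 𝕜] [TopologicalSpace 𝕜] [OrderTopology 𝕜]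
    {u a : ℕ → 𝕜} {θ S : 𝕜} (hθ0 : 0 ≤ θ) (hθ1 : θ < 1) (hbdd : BddAbove (Set.range u))
    (hu : ∀ n, u n ≤ a n + θ * u (n + 1)) (hS : HasSum (fun n ↦ θ ^ n * a n) S) :
    u 0 ≤ S := by
  obtain ⟨B, hB⟩ := hbdd
  have partial_bound (n : ℕ) : u 0 ≤ ∑ i ∈ Finset.range n, θ ^ i * a i + θ ^ n * B := by
    grw [le_sum_range_of_le_add_mul_succ hθ0 hu n, hB (mem_range_self n)]
  have remainder : Tendsto (fun n ↦ θ ^ n * B) atTop (𝓝 0) := by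
    simpa only [zero_mul] using (tendsto_pow_atTop_nhds_zero_of_lt_one hθ0 hθ1).mul_const B
  simpa only [add_zero] using
    ge_of_tendsto' (hS.tendsto_sum_nat.add remainder) partial_bound

theorem exists_mem_Ioo_lt_rpow {θ : ℝ} (hθ : θ < 1) (β : ℝ) : ∃ τ ∈ Ioo (0 : ℝ) 1, θ < τ ^ β := by
  have near_one : ∀ᶠ τ : ℝ in 𝓝 1, θ < τ ^ β :=
    (Real.continuousAt_rpow_const 1 β (.inl one_ne_zero)).eventually_const_lt
      (by simpa only [Real.one_rpow] using hθ)
  have below_one : ∀ᶠ τ : ℝ in 𝓝[<] 1, τ ∈ Ioo 0 1 := Ioo_mem_nhdsLT zero_lt_one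
  exact (below_one.and (near_one.filter_mono nhdsWithin_le_nhds)).exists

theorem hasSum_pow_mul_div_rpow {θ β τ L A : ℝ} (hθ : 0 ≤ θ) (hτ : 0 < τ) (hL : 0 ≤ L)
    (hθτ : θ < τ ^ β) :
    HasSum (fun n : ℕ ↦ θ ^ n * (A / (τ ^ n * L) ^ β)) ((1 - θ / τ ^ β)⁻¹ * (A / L ^ β)) := by
  have ratio_nonneg : 0 ≤ θ / τ ^ β := by positivity
  have ratio_lt_one : θ / τ ^ β < 1 := (div_lt_one (by positivity)).2 hθτ
  have term_eq (n : ℕ) :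
      (θ / τ ^ β) ^ n * (A / L ^ β) = θ ^ n * (A / (τ ^ n * L) ^ β) := by
    rw [Real.mul_rpow (by positivity) hL, ← Real.rpow_pow_comm hτ.le, div_pow]
    ring
  simpa only [term_eq] using
    (hasSum_geometric_of_lt_one ratio_nonneg ratio_lt_one).mul_right (A / L ^ β)

theorem le_mul_div_rpow_of_le_div_rpow_add_mul {θ β τ ρ R₀ A : ℝ} {h : ℝ → ℝ}
    (hθ0 : 0 ≤ θ) (hθ1 : θ < 1) (hτ : τ ∈ Ioo (0 : ℝ) 1) (hθτ : θ < τ ^ β) (hρR : ρ < R₀)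
    (hbdd : BddAbove (h '' Ico ρ R₀))
    (hrec : ∀ r d, ρ ≤ r → r < d → d < R₀ → h r ≤ A / (d - r) ^ β + θ * h d) :
    h ρ ≤ (1 - θ / τ ^ β)⁻¹ * (A / ((1 - τ) * (R₀ - ρ)) ^ β) := by
  obtain ⟨hτ0, hτ1⟩ := hτ
  let r (n : ℕ) : ℝ := R₀ - τ ^ n * (R₀ - ρ)
  have gap_pos : 0 < (1 - τ) * (R₀ - ρ) := mul_pos (sub_pos.2 hτ1) (sub_pos.2 hρR)
  have r_zero : r 0 = ρ := by simp [r]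
  have r_succ_sub (n : ℕ) : r (n + 1) - r n = τ ^ n * ((1 - τ) * (R₀ - ρ)) := by
    simp only [r]
    ring
  have r_lt_succ (n : ℕ) : r n < r (n + 1) :=
    sub_pos.1 (r_succ_sub n ▸ mul_pos (pow_pos hτ0 n) gap_pos)
  have r_mem (n : ℕ) : r n ∈ Ico ρ R₀ :=
    ⟨r_zero ▸ monotone_nat_of_le_succ (fun k ↦ (r_lt_succ k).le) n.zero_le,
      sub_lt_self R₀ (mul_pos (pow_pos hτ0 n) (sub_pos.2 hρR))⟩
  have bdd_along_r : BddAbove (Set.range (h ∘ r)) :=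
    hbdd.mono (range_subset_iff.2 fun n ↦ mem_image_of_mem h (r_mem n))
  have rec_along_r (n : ℕ) :
      h (r n) ≤ A / (τ ^ n * ((1 - τ) * (R₀ - ρ))) ^ β + θ * h (r (n + 1)) :=
    r_succ_sub n ▸ hrec _ _ (r_mem n).1 (r_lt_succ n) (r_mem (n + 1)).2
  have bound_at_r_zero := le_of_hasSum_of_le_add_mul_succ hθ0 hθ1 bdd_along_r rec_along_r
    (hasSum_pow_mul_div_rpow hθ0 hτ0 gap_pos.le hθτ)
  rwa [Function.comp_apply, r_zero] at bound_at_r_zero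

theorem stmt_3_general {θ : ℝ} (β : ℝ) (hθ0 : 0 ≤ θ) (hθ1 : θ < 1) :
    ∃ c : ℝ, 0 < c ∧
      ∀ (ρ R₀ A : ℝ) (h : ℝ → ℝ), ρ < R₀ → BddAbove (h '' Ico ρ R₀) →
        (∀ r d : ℝ, ρ ≤ r → r < d → d < R₀ → h r ≤ A / (d - r) ^ β + θ * h d) →
        h ρ ≤ c * A / (R₀ - ρ) ^ β := by
  obtain ⟨τ, hτ, hθτ⟩ := exists_mem_Ioo_lt_rpow hθ1 β
  have one_sub_τ_pos : 0 < 1 - τ := sub_pos.2 hτ.2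
  have one_sub_ratio_pos : 0 < 1 - θ / τ ^ β :=
    sub_pos.2 ((div_lt_one (Real.rpow_pos_of_pos hτ.1 β)).2 hθτ)
  refine ⟨(1 - θ / τ ^ β)⁻¹ / (1 - τ) ^ β, by positivity, fun ρ R₀ A h hρR hbdd hrec ↦ ?_⟩
  calc h ρ ≤ (1 - θ / τ ^ β)⁻¹ * (A / ((1 - τ) * (R₀ - ρ)) ^ β) :=
        le_mul_div_rpow_of_le_div_rpow_add_mul hθ0 hθ1 hτ hθτ hρR hbdd hrec
    _ = (1 - θ / τ ^ β)⁻¹ / (1 - τ) ^ β * A / (R₀ - ρ) ^ β := by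
        rw [Real.mul_rpow one_sub_τ_pos.le (sub_pos.2 hρR).le]
        ring

/-- Iteration lemma: if `h : [ρ, R₀] → ℝ` is non-negative and bounded and satisfies
`h(r) ≤ A/(d−r)^β + θ h(d)` for `ρ ≤ r < d ≤ R₀`, with `0 < θ < 1`, `A ≥ 0`, `β > 0`,
then `h(ρ) ≤ c A/(R₀−ρ)^β` with `c = c(θ, β) > 0`. -/
theorem stmt_3 (θ β : ℝ) (hθ0 : 0 < θ) (hθ1 : θ < 1) (hβ : 0 < β) :
    ∃ c : ℝ, 0 < c ∧
      ∀ (ρ R₀ A : ℝ) (h : ℝ → ℝ),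
        0 < ρ → ρ < R₀ → 0 ≤ A →
        (∀ r ∈ Set.Icc ρ R₀, 0 ≤ h r) →
        (∃ B : ℝ, ∀ r ∈ Set.Icc ρ R₀, h r ≤ B) →
        (∀ r d : ℝ, ρ ≤ r → r < d → d ≤ R₀ → h r ≤ A / (d - r) ^ β + θ * h d) →
        h ρ ≤ c * A / (R₀ - ρ) ^ β := by
  obtain ⟨c, hc, bound⟩ := stmt_3_general β hθ0.le hθ1
  exact ⟨c, hc, fun ρ R₀ A h _ hρR _ _ ⟨B, hB⟩ hrec ↦ bound ρ R₀ A h hρR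
    ⟨B, forall_mem_image.2 fun r hr ↦ hB r (Ico_subset_Icc_self hr)⟩
    fun r d hr hrd hd ↦ hrec r d hr hrd hd.le⟩
end

section
/- Let n, N ≥ 1 be integers, 1 ≤ p ≤ q real numbers and C ≥ 1. Let g : ℝ^{N×n} → ℝ be continuously differentiable and convex, and suppose that ‖ζ‖^p ≤ g(ζ) ≤ C(1 + ‖ζ‖^q) for every ζ ∈ ℝ^{N×n}. Then there exists a constant c > 0, depending only on n, N, q and C, such that ‖Dg(ζ)‖ ≤ c(1 + ‖ζ‖^{q−1}) for every ζ ∈ ℝ^{N×n}, where Dg(ζ) is the (Fréchet) derivative of g at ζ and ‖Dg(ζ)‖ its operator norm. -/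
/-!
A convex function lies above its tangent hyperplanes, so an upper bound `M` for `g` on the ball of
radius `r` about `ζ` gives `‖Dg(ζ)‖ ≤ (M - g ζ) / r`. Taking `r = 1 + ‖ζ‖`, the growth condition
allows `M` of order `(1 + ‖ζ‖) ^ q`, while `g ζ ≥ 0`; dividing by `r` lowers the exponent by one.
-/

section ConvexDerivative

variable {E : Type*} [NormedAddCommGroup E] [NormedSpace ℝ E] {g : E → ℝ} {g' : E →L[ℝ] ℝ}
  {s : Set E} {x y : E} {r M : ℝ}

theorem fderivWithin_apply_sub_le_of_convexOn (hconv : ConvexOn ℝ s g)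
    (hg : HasFDerivWithinAt g g' s x) (hx : x ∈ s) (hy : y ∈ s) :
    g' (y - x) ≤ g y - g x := by
  let line : ℝ →ᵃ[ℝ] E := AffineMap.lineMap x y
  have line_zero : line 0 = x := AffineMap.lineMap_apply_zero x y
  have line_one : line 1 = y := AffineMap.lineMap_apply_one x y
  have hderiv : HasDerivWithinAt (g ∘ line) (g' (y - x)) (line ⁻¹' s) 0 := by
    rw [← line_zero] at hg
    exact hg.comp_hasDerivWithinAt 0 AffineMap.hasDerivWithinAt_lineMap (Set.mapsTo_preimage _ _)
  have hslope := (hconv.comp_affineMap line).le_slope_of_hasDerivWithinAt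
    (by simpa [line_zero]) (by simpa [line_one]) zero_lt_one hderiv
  simpa [slope_def_field, line_zero, line_one] using hslope

theorem norm_fderiv_le_of_convexOn_closedBall (hr : 0 < r)
    (hconv : ConvexOn ℝ (Metric.closedBall x r) g) (hg : HasFDerivAt g g' x)
    (hM : ∀ y ∈ Metric.closedBall x r, g y ≤ M) :
    ‖g'‖ ≤ (M - g x) / r := by
  have apply_le (v : E) (hv : ‖v‖ ≤ r) : g' v ≤ M - g x := by
    have hxv : x + v ∈ Metric.closedBall x r := by simpa using hv
    calc g' v = g' (x + v - x) := by rw [add_sub_cancel_left]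
      _ ≤ g (x + v) - g x := fderivWithin_apply_sub_le_of_convexOn hconv
          hg.hasFDerivWithinAt (Metric.mem_closedBall_self hr.le) hxv
      _ ≤ M - g x := by gcongr; exact hM _ hxv
  refine g'.opNorm_bound_of_ball_bound hr _ fun v hv => ?_
  rw [mem_closedBall_zero_iff] at hv
  rw [Real.norm_eq_abs, abs_le', ← map_neg]
  exact ⟨apply_le v hv, apply_le (-v) (by rwa [norm_neg])⟩

end ConvexDerivative

theorem add_rpow_le_two_rpow_mul_rpow_add_rpow {a b p : ℝ} (ha : 0 ≤ a) (hb : 0 ≤ b)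
    (hp : 0 ≤ p) : (a + b) ^ p ≤ 2 ^ p * (a ^ p + b ^ p) :=
  calc (a + b) ^ p ≤ (2 * max a b) ^ p := by
        gcongr; linarith [le_max_left a b, le_max_right a b]
    _ = 2 ^ p * max (a ^ p) (b ^ p) := by
        rw [Real.mul_rpow zero_le_two (le_max_of_le_left ha), Real.rpow_max ha hb hp]
    _ ≤ 2 ^ p * (a ^ p + b ^ p) := by
        gcongr; exact max_le_add_of_nonneg (by positivity) (by positivity)

theorem one_add_mul_rpow_le {a b p : ℝ} (ha : 0 ≤ a) (hb : 1 ≤ b) (hp : 0 ≤ p) :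
    1 + (a * b) ^ p ≤ (1 + a ^ p) * b ^ p := by
  rw [Real.mul_rpow ha (by positivity), one_add_mul]
  gcongr
  exact Real.one_le_rpow hb hp

theorem stmt_4_general {E : Type*} [NormedAddCommGroup E] [NormedSpace ℝ E] {g : E → ℝ}
    {q C : ℝ} {ζ : E} (hq : 1 ≤ q) (hdiff : DifferentiableAt ℝ g ζ)
    (hconv : ConvexOn ℝ Set.univ g) (hnonneg : 0 ≤ g ζ)
    (hgrowth : ∀ η, g η ≤ C * (1 + ‖η‖ ^ q)) :
    ‖fderiv ℝ g ζ‖ ≤ C * (1 + 2 ^ q) * 2 ^ (q - 1) * (1 + ‖ζ‖ ^ (q - 1)) := by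
  have hC : 0 ≤ C := nonneg_of_mul_nonneg_left (hnonneg.trans (hgrowth ζ)) (by positivity)
  set r := 1 + ‖ζ‖
  have one_le_r : 1 ≤ r := le_add_of_nonneg_right (norm_nonneg ζ)
  have bound_on_ball (η : E) (hη : η ∈ Metric.closedBall ζ r) : g η ≤ C * (1 + (2 * r) ^ q) := by
    have norm_η_le : ‖η‖ ≤ 2 * r := by linarith [norm_le_of_mem_closedBall hη]
    exact (hgrowth η).trans (by gcongr)
  calc ‖fderiv ℝ g ζ‖ ≤ (C * (1 + (2 * r) ^ q) - g ζ) / r :=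
        norm_fderiv_le_of_convexOn_closedBall (by positivity)
          (hconv.subset (Set.subset_univ _) (convex_closedBall ζ r)) hdiff.hasFDerivAt bound_on_ball
    _ ≤ C * ((1 + 2 ^ q) * r ^ q) / r := by
        gcongr
        exact (sub_le_self _ hnonneg).trans
          (by gcongr; exact one_add_mul_rpow_le zero_le_two one_le_r (by positivity))
    _ = C * (1 + 2 ^ q) * r ^ (q - 1) := by
        rw [Real.rpow_sub_one (by positivity)]; ring
    _ ≤ C * (1 + 2 ^ q) * (2 ^ (q - 1) * (1 + ‖ζ‖ ^ (q - 1))) := by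
        gcongr
        simpa only [Real.one_rpow] using add_rpow_le_two_rpow_mul_rpow_add_rpow
          zero_le_one (norm_nonneg ζ) (sub_nonneg.2 hq)
    _ = C * (1 + 2 ^ q) * 2 ^ (q - 1) * (1 + ‖ζ‖ ^ (q - 1)) := by ring

/-- Growth of the derivative of a convex integrand with `(p,q)`-growth: if `g` is `C¹`,
convex, and `‖ζ‖^p ≤ g(ζ) ≤ C(1 + ‖ζ‖^q)`, then `‖Dg(ζ)‖ ≤ c(1 + ‖ζ‖^{q−1})` with a
constant `c > 0` depending only on `n, N, q, C`. -/
theorem stmt_4 (n N : ℕ) (hn : 1 ≤ n) (hN : 1 ≤ N) (q C : ℝ) (hC : 1 ≤ C) :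
    ∃ c : ℝ, 0 < c ∧
      ∀ p : ℝ, 1 ≤ p → p ≤ q →
        ∀ g : EuclideanSpace ℝ (Fin N × Fin n) → ℝ,
          ContDiff ℝ 1 g →
          ConvexOn ℝ Set.univ g →
          (∀ ζ : EuclideanSpace ℝ (Fin N × Fin n),
            ‖ζ‖ ^ p ≤ g ζ ∧ g ζ ≤ C * (1 + ‖ζ‖ ^ q)) →
          ∀ ζ : EuclideanSpace ℝ (Fin N × Fin n),
            ‖fderiv ℝ g ζ‖ ≤ c * (1 + ‖ζ‖ ^ (q - 1)) :=
  ⟨C * (1 + 2 ^ q) * 2 ^ (q - 1), by positivity, fun _p hp hpq _g hg hconv hbounds ζ =>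
    stmt_4_general (hp.trans hpq) (hg.differentiable one_ne_zero ζ) hconv
      ((Real.rpow_nonneg (norm_nonneg ζ) _).trans (hbounds ζ).1) fun η => (hbounds η).2⟩
end

section
/- Let n ≥ 1 and N ≥ 2 be integers and let p be a real number with 1 ≤ p < N. There exists a constant C = C(N, p) > 0 such that the following holds: if v : ℝⁿ → ℝᴺ is differentiable at a point x₀, then, with w^a denoting the map x ↦ (v(x) − a)/‖v(x) − a‖ (which is differentiable at x₀ for every a ∈ ℝᴺ with a ≠ v(x₀), i.e. for Lebesgue-almost every a), one has ∫_{B^N_{1/2}(0)} ‖Dw^a(x₀)‖^p da ≤ C ‖Dv(x₀)‖^p, the integral being over a in the ball B^N_{1/2}(0) ⊂ ℝᴺ with respect to N-dimensional Lebesgue measure. -/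
open MeasureTheory Metric

/-!
The map `y ↦ y / ‖y‖` has derivative `‖y‖⁻¹ P` at `y ≠ 0`, where `P` is the orthogonal projection
onto the hyperplane `yᗮ`. By the chain rule `‖Dw^a(x₀)‖ ≤ ‖Dv(x₀)‖ / ‖v(x₀) - a‖`, so the
claim reduces to bounding `∫ ‖y - a‖ ^ (-p) da` over a set of finite measure, uniformly in `y`.
Inside the unit ball around `y` the integral is, by translation invariance, at most
`∫_{‖b‖ < 1} ‖b‖ ^ (-p) db`, which is finite because `p` is smaller than the dimension; outside
that ball the integrand is at most `1`.
-/

open Module Submodule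

universe u

section Normalization

variable {E F : Type*} [NormedAddCommGroup E] [NormedSpace ℝ E]
  [NormedAddCommGroup F] [InnerProductSpace ℝ F]

theorem hasFDerivAt_norm_inv {y : F} (hy : y ≠ 0) :
    HasFDerivAt (fun z : F => ‖z‖⁻¹) (-(‖y‖ ^ 3)⁻¹ • innerSL ℝ y) y := by
  have h_norm_pos : 0 < ‖y‖ := norm_pos_iff.mpr hy
  have h_sqrt := (hasStrictFDerivAt_norm_sq y).hasFDerivAt.sqrt (pow_pos h_norm_pos 2).ne'
  simp only [Real.sqrt_sq (norm_nonneg _)] at h_sqrt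
  refine ((hasDerivAt_inv h_norm_pos.ne').comp_hasFDerivAt y h_sqrt).congr_fderiv ?_
  rw [← Nat.cast_smul_eq_nsmul ℝ, smul_smul, smul_smul]
  congr 1
  field_simp
  norm_num

theorem hasFDerivAt_norm_inv_smul_self {y : F} (hy : y ≠ 0) :
    HasFDerivAt (fun z : F => ‖z‖⁻¹ • z) (‖y‖⁻¹ • (ℝ ∙ y)ᗮ.starProjection) y := by
  refine ((hasFDerivAt_norm_inv hy).smul (hasFDerivAt_id y)).congr_fderiv ?_
  ext h
  have h_norm_ne : ‖y‖ ≠ 0 := norm_ne_zero_iff.mpr hy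
  simp only [add_apply, smul_apply, smul_eq_mul, ContinuousLinearMap.id_apply,
    ContinuousLinearMap.smulRight_apply, innerSL_apply_apply,
    starProjection_orthogonal_val, starProjection_singleton, RCLike.ofReal_real_eq_id, id_eq]
  match_scalars <;> field_simp

theorem norm_fderiv_norm_inv_smul_self_le {y : F} (hy : y ≠ 0) :
    ‖fderiv ℝ (fun z : F => ‖z‖⁻¹ • z) y‖ ≤ ‖y‖⁻¹ := by
  rw [(hasFDerivAt_norm_inv_smul_self hy).fderiv, norm_smul, norm_inv, norm_norm]
  exact mul_le_of_le_one_right (by positivity) (starProjection_norm_le _)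

theorem differentiableAt_norm_inv_smul {f : E → F} {x : E} (hf : DifferentiableAt ℝ f x)
    (hx : f x ≠ 0) : DifferentiableAt ℝ (fun z => ‖f z‖⁻¹ • f z) x :=
  (hasFDerivAt_norm_inv_smul_self hx).differentiableAt.comp x hf

theorem norm_fderiv_norm_inv_smul_le {f : E → F} {x : E} (hf : DifferentiableAt ℝ f x)
    (hx : f x ≠ 0) :
    ‖fderiv ℝ (fun z => ‖f z‖⁻¹ • f z) x‖ ≤ ‖f x‖⁻¹ * ‖fderiv ℝ f x‖ := by
  have h_chain : fderiv ℝ (fun z => ‖f z‖⁻¹ • f z) x =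
      (fderiv ℝ (fun y : F => ‖y‖⁻¹ • y) (f x)).comp (fderiv ℝ f x) :=
    fderiv_comp x (hasFDerivAt_norm_inv_smul_self hx).differentiableAt hf
  rw [h_chain]
  refine (ContinuousLinearMap.opNorm_comp_le _ _).trans ?_
  gcongr
  exact norm_fderiv_norm_inv_smul_self_le hx

theorem norm_fderiv_norm_inv_smul_rpow_le {f : E → F} {x : E} (hf : DifferentiableAt ℝ f x)
    (hx : f x ≠ 0) {p : ℝ} (hp : 0 ≤ p) :
    ‖fderiv ℝ (fun z => ‖f z‖⁻¹ • f z) x‖ ^ p ≤ ‖fderiv ℝ f x‖ ^ p * ‖f x‖ ^ (-p) :=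
  calc ‖fderiv ℝ (fun z => ‖f z‖⁻¹ • f z) x‖ ^ p
      ≤ (‖f x‖⁻¹ * ‖fderiv ℝ f x‖) ^ p := by
        gcongr
        exact norm_fderiv_norm_inv_smul_le hf hx
    _ = ‖fderiv ℝ f x‖ ^ p * ‖f x‖ ^ (-p) := by
        rw [Real.mul_rpow (by positivity) (by positivity), Real.inv_rpow (norm_nonneg _),
          ← Real.rpow_neg (norm_nonneg _), mul_comm]

theorem setLIntegral_norm_fderiv_norm_inv_smul_sub_rpow_le [MeasurableSpace F]
    (μ : Measure F) [NullSingletonClass μ] (s : Set F) {p : ℝ} (hp : 0 ≤ p) {v : E → F} {x₀ : E}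
    (hv : DifferentiableAt ℝ v x₀) :
    ∫⁻ a in s, ENNReal.ofReal (‖fderiv ℝ (fun x => ‖v x - a‖⁻¹ • (v x - a)) x₀‖ ^ p) ∂μ ≤
      ENNReal.ofReal (‖fderiv ℝ v x₀‖ ^ p) *
        ∫⁻ a in s, ENNReal.ofReal (‖v x₀ - a‖ ^ (-p)) ∂μ := by
  rw [← lintegral_const_mul' _ _ ENNReal.ofReal_ne_top]
  have h_ae_ne : ∀ᵐ a ∂μ.restrict s, a ≠ v x₀ := ae_restrict_of_ae (Measure.ae_ne μ (v x₀))
  refine lintegral_mono_ae (h_ae_ne.mono fun a ha => ?_)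
  rw [← ENNReal.ofReal_mul (by positivity)]
  have h_rpow := norm_fderiv_norm_inv_smul_rpow_le (hv.sub_const a) (sub_ne_zero.mpr ha.symm) hp
  rw [fderiv_sub_const] at h_rpow
  exact ENNReal.ofReal_le_ofReal h_rpow

end Normalization

section SingularIntegral

variable {F : Type*} [NormedAddCommGroup F] [MeasurableSpace F] [BorelSpace F]

theorem setLIntegral_norm_sub_rpow_neg_le (μ : Measure F) [μ.IsAddRightInvariant] (s : Set F)
    {p : ℝ} (hp : 0 ≤ p) (y : F) :
    ∫⁻ a in s, ENNReal.ofReal (‖y - a‖ ^ (-p)) ∂μ ≤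
      ∫⁻ b in ball 0 1, ENNReal.ofReal (‖b‖ ^ (-p)) ∂μ + μ s := by
  rw [← lintegral_inter_add_sdiff _ s (measurableSet_ball (x := y) (ε := 1))]
  refine add_le_add ?_ ?_
  · have h_translate : (· - y) ⁻¹' ball (0 : F) 1 = ball y 1 := by
      ext a
      simp only [Set.mem_preimage, mem_ball_iff_norm, sub_zero]
    calc ∫⁻ a in s ∩ ball y 1, ENNReal.ofReal (‖y - a‖ ^ (-p)) ∂μ
        ≤ ∫⁻ a in ball y 1, ENNReal.ofReal (‖y - a‖ ^ (-p)) ∂μ :=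
          lintegral_mono_set Set.inter_subset_right
      _ = ∫⁻ b in ball 0 1, ENNReal.ofReal (‖b‖ ^ (-p)) ∂μ := by
          simp only [← h_translate, norm_sub_rev y]
          exact (measurePreserving_sub_right μ y).setLIntegral_comp_preimage
            (f := fun b => ENNReal.ofReal (‖b‖ ^ (-p))) measurableSet_ball (by fun_prop)
  · calc ∫⁻ a in s \ ball y 1, ENNReal.ofReal (‖y - a‖ ^ (-p)) ∂μ
        ≤ ∫⁻ _ in s \ ball y 1, 1 ∂μ := by
          refine setLIntegral_mono measurable_const fun a ha => ?_
          have h_one_le : 1 ≤ ‖y - a‖ := by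
            simpa only [mem_ball_iff_norm', not_lt] using ha.2
          exact ENNReal.ofReal_le_one.mpr
            (Real.rpow_le_one_of_one_le_of_nonpos h_one_le (neg_nonpos.mpr hp))
      _ = μ (s \ ball y 1) := setLIntegral_one _
      _ ≤ μ s := measure_mono Set.sdiff_subset

variable [NormedSpace ℝ F] [FiniteDimensional ℝ F]

theorem setLIntegral_ball_norm_rpow_neg_ne_top (μ : Measure F) [μ.IsAddHaarMeasure] {p : ℝ}
    (hF : 0 < finrank ℝ F) (hpF : p < finrank ℝ F) (r : ℝ) :
    ∫⁻ b in ball (0 : F) r, ENNReal.ofReal (‖b‖ ^ (-p)) ∂μ ≠ ⊤ := by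
  have h_integrable : IntegrableOn (fun b : F => ‖b‖ ^ (-p)) (ball 0 r) μ := by
    refine integrableOn_ball_of_norm_le_rpow (C := 1) hF hpF (.of_forall fun b => ?_)
      (Measurable.aestronglyMeasurable <| by fun_prop)
    rw [one_mul, Real.norm_of_nonneg (by positivity)]
  exact h_integrable.lintegral_lt_top.ne

end SingularIntegral

theorem stmt_7_general {F : Type*} [NormedAddCommGroup F] [InnerProductSpace ℝ F]
    [FiniteDimensional ℝ F] [MeasurableSpace F] [BorelSpace F] (μ : Measure F)
    [μ.IsAddHaarMeasure] {s : Set F} (hs : μ s ≠ ⊤) {p : ℝ} (hp : 0 ≤ p)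
    (hpF : p < finrank ℝ F) :
    ∃ C : ℝ, 0 < C ∧
      ∀ (E : Type u) [NormedAddCommGroup E] [NormedSpace ℝ E] (v : E → F) (x₀ : E),
        DifferentiableAt ℝ v x₀ →
        (∀ a : F, a ≠ v x₀ → DifferentiableAt ℝ (fun x => ‖v x - a‖⁻¹ • (v x - a)) x₀) ∧
        ∫⁻ a in s, ENNReal.ofReal (‖fderiv ℝ (fun x => ‖v x - a‖⁻¹ • (v x - a)) x₀‖ ^ p) ∂μ ≤
          ENNReal.ofReal (C * ‖fderiv ℝ v x₀‖ ^ p) := by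
  have hF : 0 < finrank ℝ F := by exact_mod_cast hp.trans_lt hpF
  have : Nontrivial F := nontrivial_of_finrank_pos hF
  let K := ∫⁻ b in ball (0 : F) 1, ENNReal.ofReal (‖b‖ ^ (-p)) ∂μ + μ s
  have hK : K ≠ ⊤ :=
    ENNReal.add_ne_top.mpr ⟨setLIntegral_ball_norm_rpow_neg_ne_top μ hF hpF 1, hs⟩
  refine ⟨K.toReal + 1, by positivity, fun E _ _ v x₀ hv =>
    ⟨fun a ha => differentiableAt_norm_inv_smul (hv.sub_const a) (sub_ne_zero.mpr ha.symm), ?_⟩⟩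
  calc ∫⁻ a in s, ENNReal.ofReal (‖fderiv ℝ (fun x => ‖v x - a‖⁻¹ • (v x - a)) x₀‖ ^ p) ∂μ
      ≤ ENNReal.ofReal (‖fderiv ℝ v x₀‖ ^ p) *
          ∫⁻ a in s, ENNReal.ofReal (‖v x₀ - a‖ ^ (-p)) ∂μ :=
        setLIntegral_norm_fderiv_norm_inv_smul_sub_rpow_le μ s hp hv
    _ ≤ ENNReal.ofReal (‖fderiv ℝ v x₀‖ ^ p) * ENNReal.ofReal (K.toReal + 1) := by
        gcongr
        refine (setLIntegral_norm_sub_rpow_neg_le μ s hp (v x₀)).trans ?_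
        exact (ENNReal.le_ofReal_iff_toReal_le hK (by positivity)).mpr (by linarith)
    _ = ENNReal.ofReal ((K.toReal + 1) * ‖fderiv ℝ v x₀‖ ^ p) := by
        rw [mul_comm, ENNReal.ofReal_mul (by positivity)]

/-- Averaged derivative bound for projections: for `1 ≤ p < N` there is `C = C(N,p) > 0`
such that, for `v` differentiable at `x₀` and `w^a(x) = (v(x) − a)/‖v(x) − a‖` (which is
differentiable at `x₀` for every `a ≠ v(x₀)`),
`∫_{B^N_{1/2}(0)} ‖Dw^a(x₀)‖^p da ≤ C ‖Dv(x₀)‖^p`. -/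
theorem stmt_7 (N : ℕ) (hN : 2 ≤ N) (p : ℝ) (hp1 : 1 ≤ p) (hpN : p < N) :
    ∃ C : ℝ, 0 < C ∧
      ∀ (n : ℕ), 1 ≤ n →
        ∀ (v : EuclideanSpace ℝ (Fin n) → EuclideanSpace ℝ (Fin N))
          (x₀ : EuclideanSpace ℝ (Fin n)),
          DifferentiableAt ℝ v x₀ →
          (∀ a : EuclideanSpace ℝ (Fin N), a ≠ v x₀ →
            DifferentiableAt ℝ (fun x => ‖v x - a‖⁻¹ • (v x - a)) x₀) ∧
          (∫⁻ a in ball (0 : EuclideanSpace ℝ (Fin N)) (1 / 2),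
              ENNReal.ofReal
                (‖fderiv ℝ (fun x => ‖v x - a‖⁻¹ • (v x - a)) x₀‖ ^ p)) ≤
            ENNReal.ofReal (C * ‖fderiv ℝ v x₀‖ ^ p) := by
  obtain ⟨C, hC, h_bound⟩ := stmt_7_general (F := EuclideanSpace ℝ (Fin N)) volume
    (measure_ball_lt_top (x := 0) (r := 1 / 2)).ne (by linarith) (by simpa using hpN)
  exact ⟨C, hC, fun n _ => h_bound (EuclideanSpace ℝ (Fin n))⟩
end

section
/- Let N ≥ 2 be an integer, let q be a real number with 1 < q < N, and let M ≥ 1. Let h : [0, ∞) → [1, ∞) be continuous, concave and non-decreasing, satisfying h(ct) ≤ M c h(t) for every c ≥ 1 and t ≥ 0, and such that for every constant r ≥ 1 the function t ↦ t^r h(t) is convex on [0, ∞). Then there exists a constant C > 0, depending only on N, q and M, such that for every real r with 1 ≤ r ≤ q, every w ∈ ℝᴺ with ‖w‖ = 1, and every ξ ≥ 0, ∫_{B^N_{1/2}(0)} (2ξ/‖w − a‖)^r h(2ξ/‖w − a‖) da ≤ C ξ^r h(ξ). -/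
open MeasureTheory Metric

/-!
The ball of radius `1 / 2` stays at distance at least `1 / 2` from `w`, so the kernel
`2 * ξ / ‖w - a‖` never exceeds `4 * ξ`. Since `t ↦ t ^ r * h t` is non-decreasing, the integral is
at most its value at `4 * ξ` times the volume of the ball, and the growth of `h` under dilation
by `4` brings this value back to `ξ`.
-/

section DilationBound

variable {h : ℝ → ℝ} {r : ℝ}

theorem monotoneOn_rpow_mul (hr : 0 ≤ r) (hmono : MonotoneOn h (Set.Ici 0))
    (hnonneg : ∀ t, 0 ≤ t → 0 ≤ h t) : MonotoneOn (fun t => t ^ r * h t) (Set.Ici 0) :=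
  (Real.monotoneOn_rpow_Ici_of_exponent_nonneg hr).mul hmono
    (fun _ ht => Real.rpow_nonneg ht r) hnonneg

theorem mul_rpow_mul_le_of_dilation_le {q c K t : ℝ} (hc : 1 ≤ c) (ht : 0 ≤ t) (hrq : r ≤ q)
    (hnonneg : 0 ≤ h (c * t)) (hdil : h (c * t) ≤ K * h t) :
    (c * t) ^ r * h (c * t) ≤ c ^ q * K * (t ^ r * h t) := by
  have hpow : (c * t) ^ r ≤ c ^ q * t ^ r := by
    rw [Real.mul_rpow (by positivity) ht]
    gcongr
  calc (c * t) ^ r * h (c * t) ≤ c ^ q * t ^ r * (K * h t) := by gcongr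
    _ = c ^ q * K * (t ^ r * h t) := by ring

end DilationBound

theorem setLIntegral_comp_div_le {α : Type*} [MeasurableSpace α] (μ : Measure α) {s : Set α}
    {f : ℝ → ENNReal} (hf : MonotoneOn f (Set.Ici 0)) {g : α → ℝ} {x δ : ℝ} (hx : 0 ≤ x)
    (hδ : 0 < δ) (hg : ∀ a ∈ s, δ ≤ g a) :
    ∫⁻ a in s, f (x / g a) ∂μ ≤ f (x / δ) * μ s := by
  have hbound : ∀ a ∈ s, f (x / g a) ≤ f (x / δ) := fun a ha =>
    hf (div_nonneg hx (hδ.le.trans (hg a ha))) (div_nonneg hx hδ.le)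
      (div_le_div_of_nonneg_left hx hδ (hg a ha))
  exact (setLIntegral_mono measurable_const hbound).trans_eq (setLIntegral_const s _)

theorem sub_le_norm_sub_of_mem_ball_zero {E : Type*} [SeminormedAddCommGroup E] {a w : E} {ρ : ℝ}
    (ha : a ∈ ball (0 : E) ρ) : ‖w‖ - ρ ≤ ‖w - a‖ :=
  (sub_le_sub_left (mem_ball_zero_iff.mp ha).le _).trans (norm_sub_norm_le w a)

theorem stmt_10_general {E : Type*} [SeminormedAddCommGroup E] [MeasurableSpace E]
    (μ : Measure E) (hμ : μ (ball 0 (1 / 2)) ≠ ⊤) (q K : ℝ) :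
    ∃ C : ℝ, 0 < C ∧
      ∀ h : ℝ → ℝ,
        MonotoneOn h (Set.Ici 0) →
        (∀ t : ℝ, 0 ≤ t → 0 ≤ h t) →
        (∀ t : ℝ, 0 ≤ t → h (4 * t) ≤ K * h t) →
        ∀ r : ℝ, 0 ≤ r → r ≤ q →
          ∀ w : E, 1 ≤ ‖w‖ →
            ∀ ξ : ℝ, 0 ≤ ξ →
              (∫⁻ a in ball (0 : E) (1 / 2),
                  ENNReal.ofReal ((2 * ξ / ‖w - a‖) ^ r * h (2 * ξ / ‖w - a‖)) ∂μ) ≤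
                ENNReal.ofReal (C * ξ ^ r * h ξ) := by
  set V := μ.real (ball (0 : E) (1 / 2))
  refine ⟨max 1 (4 ^ q * K * V), by positivity, ?_⟩
  intro h hmono hnonneg hdil r hr hrq w hw ξ hξ
  have hweight_mono := ENNReal.ofReal_mono.comp_monotoneOn (monotoneOn_rpow_mul hr hmono hnonneg)
  have hdist : ∀ a ∈ ball (0 : E) (1 / 2), 1 / 2 ≤ ‖w - a‖ := fun a ha => by
    linarith [sub_le_norm_sub_of_mem_ball_zero (w := w) ha]
  have h4ξ : 0 ≤ h (4 * ξ) := hnonneg _ (by positivity)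
  have hweight_nonneg : 0 ≤ ξ ^ r * h ξ := mul_nonneg (Real.rpow_nonneg hξ r) (hnonneg ξ hξ)
  have hreal : (4 * ξ) ^ r * h (4 * ξ) * V ≤ max 1 (4 ^ q * K * V) * ξ ^ r * h ξ :=
    calc (4 * ξ) ^ r * h (4 * ξ) * V ≤ 4 ^ q * K * (ξ ^ r * h ξ) * V := by
          gcongr ?_ * V
          exact mul_rpow_mul_le_of_dilation_le (by norm_num) hξ hrq h4ξ (hdil ξ hξ)
      _ = 4 ^ q * K * V * (ξ ^ r * h ξ) := by ring
      _ ≤ max 1 (4 ^ q * K * V) * (ξ ^ r * h ξ) := by gcongr; exact le_max_right _ _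
      _ = max 1 (4 ^ q * K * V) * ξ ^ r * h ξ := by ring
  calc _ ≤ ENNReal.ofReal ((2 * ξ / (1 / 2)) ^ r * h (2 * ξ / (1 / 2))) * μ (ball 0 (1 / 2)) :=
        setLIntegral_comp_div_le μ hweight_mono (by positivity) one_half_pos hdist
    _ = ENNReal.ofReal ((4 * ξ) ^ r * h (4 * ξ) * V) := by
        rw [show 2 * ξ / (1 / 2) = 4 * ξ by ring, ← ofReal_measureReal hμ,
          ← ENNReal.ofReal_mul (by positivity)]
    _ ≤ ENNReal.ofReal (max 1 (4 ^ q * K * V) * ξ ^ r * h ξ) := ENNReal.ofReal_le_ofReal hreal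

/-- Jensen-type averaged bound for the weight `h`: for `1 < q < N`, `M ≥ 1`, there is
`C = C(N, q, M) > 0` such that for every continuous, concave, non-decreasing
`h : [0,∞) → [1,∞)` with `h(ct) ≤ M c h(t)` for `c ≥ 1` and `t ↦ t^r h(t)` convex for
every `r ≥ 1`, every `r ∈ [1, q]`, every unit vector `w` and every `ξ ≥ 0`,
`∫_{B^N_{1/2}(0)} (2ξ/‖w−a‖)^r h(2ξ/‖w−a‖) da ≤ C ξ^r h(ξ)`. -/
theorem stmt_10 (N : ℕ) (hN : 2 ≤ N) (q M : ℝ) (hq1 : 1 < q) (hqN : q < N) (hM : 1 ≤ M) :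
    ∃ C : ℝ, 0 < C ∧
      ∀ h : ℝ → ℝ,
        ContinuousOn h (Set.Ici 0) →
        ConcaveOn ℝ (Set.Ici 0) h →
        MonotoneOn h (Set.Ici 0) →
        (∀ t : ℝ, 0 ≤ t → 1 ≤ h t) →
        (∀ c : ℝ, 1 ≤ c → ∀ t : ℝ, 0 ≤ t → h (c * t) ≤ M * c * h t) →
        (∀ r : ℝ, 1 ≤ r → ConvexOn ℝ (Set.Ici 0) (fun t => t ^ r * h t)) →
        ∀ r : ℝ, 1 ≤ r → r ≤ q →
          ∀ w : EuclideanSpace ℝ (Fin N), ‖w‖ = 1 →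
            ∀ ξ : ℝ, 0 ≤ ξ →
              (∫⁻ a in ball (0 : EuclideanSpace ℝ (Fin N)) (1 / 2),
                  ENNReal.ofReal
                    ((2 * ξ / ‖w - a‖) ^ r * h (2 * ξ / ‖w - a‖))) ≤
                ENNReal.ofReal (C * ξ ^ r * h ξ) := by
  obtain ⟨C, hC, hbound⟩ := stmt_10_general
    (volume : Measure (EuclideanSpace ℝ (Fin N))) measure_ball_lt_top.ne q (M * 4)
  exact ⟨C, hC, fun h _ _ hmono hone hdil _ r hr hrq w hw =>
    hbound h hmono (fun t ht => zero_le_one.trans (hone t ht)) (hdil 4 (by norm_num))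
      r (zero_le_one.trans hr) hrq w hw.ge⟩
end
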